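/- arXiv:2103.09661 — 3 statements merged into one kernel-verified Lean document; each statement's English description precedes it below -/
import Mathlib

section
/- Let m be a real number with m ≥ 3. Then there do not exist real numbers x, y satisfying the three conditions −2x + m·y ≥ 0, m·x − 2y ≥ 0, and −2x² + 2m·x·y − 2y² = −2. (Equivalently, for a class 𝐫 = x·𝐬 + y·𝐭 in the real span of two spherical classes 𝐬, 𝐭 with 𝐬² = 𝐭² = −2 and (𝐬,𝐭) = m ≥ 3, the system (𝐬,𝐫) ≥ 0, (𝐭,𝐭) = −2, (𝐭,𝐫) ≥ 0, 𝐫² = −2 is contradictory.) -/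
/-- For `m ≥ 3`, the system `−2x + m y ≥ 0`, `m x − 2y ≥ 0`,
`−2x² + 2 m x y − 2y² = −2` has no real solutions. -/
theorem no_third_spherical_class (m : ℝ) (hm : 3 ≤ m) :
    ¬ ∃ x y : ℝ, -2 * x + m * y ≥ 0 ∧ m * x - 2 * y ≥ 0 ∧
      -2 * x ^ 2 + 2 * m * x * y - 2 * y ^ 2 = -2 := by
  rintro ⟨x, y, ha, hb, h⟩
  have hd : 0 < m ^ 2 - 4 := by nlinarith
  have hy : 0 ≤ y := by
    refine nonneg_of_mul_nonneg_right (a := m ^ 2 - 4) ?_ hd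
    nlinarith [mul_nonneg (by linarith : (0 : ℝ) ≤ m) ha]
  have hx : 0 ≤ x := by
    refine nonneg_of_mul_nonneg_right (a := m ^ 2 - 4) ?_ hd
    nlinarith [mul_nonneg (by linarith : (0 : ℝ) ≤ m) hb]
  nlinarith [mul_nonneg hx ha, mul_nonneg hy hb]
end

section
/- Let r, m, d, t be integers with r > 0, m > 0, d > 0 and gcd(r, gcd(m, t)) = 1. Then there exists an integer k such that gcd(m, gcd(m·d + k·r, t + m·k)) = 1. -/
/-- A twist by `O(kf)` can always be chosen making the first Chern class and
the last component coprime: if `r > 0`, `m > 0`, `d > 0` and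
`gcd(r, gcd(m, t)) = 1`, then there is an integer `k` with
`gcd(m, gcd(m·d + k·r, t + m·k)) = 1`. -/
theorem exists_coprime_twist (r m d t : ℤ) (hr : 0 < r) (hm : 0 < m) (hd : 0 < d)
    (hprim : Int.gcd r (Int.gcd m t : ℤ) = 1) :
    ∃ k : ℤ, Int.gcd m (Int.gcd (m * d + k * r) (t + m * k) : ℤ) = 1 := by
  refine ⟨1, ?_⟩
  have key : ∀ g : ℤ, g ∣ m → g ∣ m * d + 1 * r → g ∣ t + m * 1 → g ∣ 1 := by
    intro g h1 h2 h3
    have hgr : g ∣ r := by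
      have h := (dvd_add_right (h1.mul_right d)).1 h2
      simpa using h
    have hgt : g ∣ t := (dvd_add_left (h1.mul_right 1)).1 h3
    have h := Int.dvd_coe_gcd hgr (Int.dvd_coe_gcd h1 hgt)
    rw [hprim] at h
    simpa using h
  have hA := Int.gcd_dvd_left m (Int.gcd (m * d + 1 * r) (t + m * 1) : ℤ)
  have hB := Int.gcd_dvd_right m (Int.gcd (m * d + 1 * r) (t + m * 1) : ℤ)
  have h := key _ hA (hB.trans (Int.gcd_dvd_left _ _)) (hB.trans (Int.gcd_dvd_right _ _))
  exact Nat.dvd_one.1 (by exact_mod_cast h)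
end

section
/- Let m be an integer with m ≥ 2. Define u : ℕ → ℤ by u₀ = 0, u₁ = 1, and u_{k+2} = m·u_{k+1} − u_k. Then for all integers x ≥ 0 and y ≥ 0, we have x² − m·x·y + y² = 1 if and only if there exists k ∈ ℕ with (x, y) = (u_k, u_{k+1}) or (x, y) = (u_{k+1}, u_k). -/
/-- Parametrization of the nonnegative solutions of `x² − m x y + y² = 1` for an
integer `m ≥ 2`, by the recursive sequence `u₀ = 0`, `u₁ = 1`,
`u_{k+2} = m u_{k+1} − u_k`. -/
theorem spherical_classes_parametrization (m : ℤ) (hm : 2 ≤ m)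
    (u : ℕ → ℤ) (hu0 : u 0 = 0) (hu1 : u 1 = 1)
    (hurec : ∀ k : ℕ, u (k + 2) = m * u (k + 1) - u k) :
    ∀ x y : ℤ, 0 ≤ x → 0 ≤ y →
      (x ^ 2 - m * x * y + y ^ 2 = 1 ↔
        ∃ k : ℕ, (x = u k ∧ y = u (k + 1)) ∨ (x = u (k + 1) ∧ y = u k)) := by
  have inv : ∀ k : ℕ, u k ^ 2 - m * u k * u (k + 1) + u (k + 1) ^ 2 = 1 := by
    intro k
    induction k with
    | zero => simp [hu0, hu1]
    | succ k ih =>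
      rw [show k + 1 + 1 = k + 2 from rfl, hurec k]
      linear_combination ih
  have desc : ∀ n : ℕ, ∀ x y : ℤ, 0 ≤ x → x ≤ n → x < y →
      x ^ 2 - m * x * y + y ^ 2 = 1 → ∃ k : ℕ, x = u k ∧ y = u (k + 1) := by
    intro n
    induction n with
    | zero =>
      intro x y hx hxn hxy h
      have hx0 : x = 0 := by
        push_cast at hxn
        omega
      subst hx0
      refine ⟨0, hu0.symm, ?_⟩
      rw [zero_add, hu1]
      nlinarith
    | succ n ih =>
      intro x y hx hxn hxy h
      rcases hx.eq_or_lt with hx0 | hx0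
      · subst hx0
        refine ⟨0, hu0.symm, ?_⟩
        rw [zero_add, hu1]
        nlinarith
      · have hz : (m * x - y) * y = x ^ 2 - 1 := by linear_combination -h
        have hy : 0 < y := hx0.trans hxy
        have hz0 : 0 ≤ m * x - y := by
          by_contra hneg
          push Not at hneg
          nlinarith
        have hzx : m * x - y < x := by
          by_contra hneg
          push Not at hneg
          nlinarith
        push_cast at hxn
        obtain ⟨k, h1, h2⟩ := ih (m * x - y) x hz0 (by omega) hzx
          (by linear_combination h)
        refine ⟨k + 1, h2, ?_⟩
        rw [show k + 1 + 1 = k + 2 from rfl, hurec k, ← h1, ← h2]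
        ring
  intro x y hx hy
  constructor
  · intro h
    rcases lt_trichotomy x y with hxy | hxy | hxy
    · obtain ⟨k, hk⟩ := desc x.toNat x y hx (by omega) hxy h
      exact ⟨k, Or.inl hk⟩
    · subst hxy
      nlinarith [mul_nonneg (sub_nonneg.2 hm) (mul_nonneg hx hx)]
    · obtain ⟨k, h1, h2⟩ := desc y.toNat y x hy (by omega) hxy
        (by linear_combination h)
      exact ⟨k, Or.inr ⟨h2, h1⟩⟩
  · rintro ⟨k, ⟨rfl, rfl⟩ | ⟨rfl, rfl⟩⟩
    · exact inv k
    · linear_combination inv k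
end
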